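/- arXiv:2003.04746 — 5 statements merged into one kernel-verified Lean document; each statement's English description precedes it below -/
import Mathlib

section
/- Let a > 0 and b ≥ 0 be constants. If u ∈ C⁴([0,1]) satisfies u''''(x) − (a + b∫₀¹(u'(t))²dt)·u''(x) = 0 for all x ∈ (0,1) together with the boundary conditions u(0) = u(1) = u''(0) = u''(1) = 0, then u(x) = 0 for all x ∈ [0,1]. -/
/-!
The Kirchhoff coefficient of a fixed solution is a constant `k > 0`, so the problem decouples into
two second-order Dirichlet problems: `w = u''` solves `w'' = k w`, and once `w = 0` is known, `u`
solves `u'' = 0`. Both have only the trivial solution by `dirichlet_eq_zero`, which applies for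
every `k ≥ 0`. There `w w'` has derivative `(w')² + k w² ≥ 0` and vanishes at both endpoints, hence
vanishes identically; so `(w²)' = 2 w w' = 0` and `w² = w(1)² = 0`.
-/

open Set MeasureTheory intervalIntegral Real Filter Topology

/-- The `n`-th derivative of `u` on the interval `[0,1]` (one-sided at the endpoints). -/
noncomputable def D (n : ℕ) (u : ℝ → ℝ) : ℝ → ℝ :=
  iteratedDerivWithin n u (Set.Icc 0 1)

/-- The supremum norm `‖u‖∞ = sup_{x ∈ [0,1]} |u x|`. -/
noncomputable def normInf (u : ℝ → ℝ) : ℝ :=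
  ⨆ x : Set.Icc (0:ℝ) 1, |u x|

/-- The hinged boundary conditions `u(0) = u(1) = u''(0) = u''(1) = 0`. -/
def BC (u : ℝ → ℝ) : Prop :=
  u 0 = 0 ∧ u 1 = 0 ∧ D 2 u 0 = 0 ∧ D 2 u 1 = 0

/-- The Kirchhoff nonlocal coefficient `a + b ∫₀¹ (u'(t))² dt`. -/
noncomputable def KCoef (a b : ℝ) (u : ℝ → ℝ) : ℝ :=
  a + b * ∫ t in (0:ℝ)..1, (D 1 u t) ^ 2

/-- Uniqueness for the Dirichlet problem `w'' = k w`, `w 0 = w 1 = 0` with `k ≥ 0`, where `w₁` and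
`w₂` are the first two derivatives of `w`. -/
lemma dirichlet_eq_zero {w w₁ w₂ : ℝ → ℝ} {k : ℝ} (hk : 0 ≤ k)
    (h₁ : ∀ x ∈ Icc (0:ℝ) 1, HasDerivWithinAt w (w₁ x) (Icc 0 1) x)
    (h₂ : ∀ x ∈ Icc (0:ℝ) 1, HasDerivWithinAt w₁ (w₂ x) (Icc 0 1) x)
    (heq : ∀ x ∈ Ioo (0:ℝ) 1, w₂ x = k * w x) (hw0 : w 0 = 0) (hw1 : w 1 = 0) :
    ∀ x ∈ Icc (0:ℝ) 1, w x = 0 := by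
  have m0 : (0:ℝ) ∈ Icc (0:ℝ) 1 := by simp
  have m1 : (1:ℝ) ∈ Icc (0:ℝ) 1 := by simp
  have mono₁ : MonotoneOn (fun x => w x * w₁ x) (Icc 0 1) := by
    refine monotoneOn_of_hasDerivWithinAt_nonneg (convex_Icc 0 1)
      (f' := fun x => w₁ x * w₁ x + w x * w₂ x)
      (fun x hx => ((h₁ x hx).mul (h₂ x hx)).continuousWithinAt)
      (fun x hx => ((h₁ x (interior_subset hx)).mul
        (h₂ x (interior_subset hx))).mono interior_subset) ?_
    intro x hx
    rw [interior_Icc] at hx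
    have : w₁ x * w₁ x + w x * w₂ x = w₁ x ^ 2 + k * w x ^ 2 := by rw [heq x hx]; ring
    simp only [this]
    positivity
  have hzero : ∀ x ∈ Icc (0:ℝ) 1, w x * w₁ x = 0 := by
    intro x hx
    have ha := mono₁ m0 hx hx.1
    have hb := mono₁ hx m1 hx.2
    simp only [hw0, hw1, zero_mul] at ha hb
    exact le_antisymm hb ha
  have mono₂ : MonotoneOn (fun x => w x * w x) (Icc 0 1) := by
    refine monotoneOn_of_hasDerivWithinAt_nonneg (convex_Icc 0 1)
      (f' := fun x => w₁ x * w x + w x * w₁ x)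
      (fun x hx => ((h₁ x hx).mul (h₁ x hx)).continuousWithinAt)
      (fun x hx => ((h₁ x (interior_subset hx)).mul
        (h₁ x (interior_subset hx))).mono interior_subset) ?_
    intro x hx
    have := hzero x (interior_subset hx)
    linarith [mul_comm (w x) (w₁ x)]
  intro x hx
  have hle := mono₂ hx m1 hx.2
  simp only [hw1, zero_mul] at hle
  exact mul_self_eq_zero.mp (le_antisymm hle (mul_self_nonneg _))

lemma hasDerivWithinAt_D {u : ℝ → ℝ} (hu : ContDiffOn ℝ 4 u (Icc 0 1)) {n : ℕ} (hn : n < 4)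
    {x : ℝ} (hx : x ∈ Icc (0:ℝ) 1) :
    HasDerivWithinAt (D n u) (D (n + 1) u x) (Icc 0 1) x := by
  have h := hu.differentiableOn_iteratedDerivWithin (m := n) (by exact_mod_cast hn)
    (uniqueDiffOn_Icc zero_lt_one) x hx
  unfold D
  rw [iteratedDerivWithin_succ]
  exact h.hasDerivWithinAt

/-- If `u ∈ C⁴([0,1])` solves the homogeneous Kirchhoff beam problem
(`g ≡ 0`) with hinged boundary conditions, then `u ≡ 0` on `[0,1]`. -/
theorem stmt0 (a b : ℝ) (ha : 0 < a) (hb : 0 ≤ b) (u : ℝ → ℝ)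
    (hu : ContDiffOn ℝ 4 u (Set.Icc 0 1))
    (heq : ∀ x ∈ Set.Ioo (0:ℝ) 1, D 4 u x - KCoef a b u * D 2 u x = 0)
    (hbc : BC u) :
    ∀ x ∈ Set.Icc (0:ℝ) 1, u x = 0 := by
  obtain ⟨hu0, hu1, hw0, hw1⟩ := hbc
  have hK : 0 ≤ KCoef a b u :=
    add_nonneg ha.le (mul_nonneg hb
      (intervalIntegral.integral_nonneg zero_le_one fun t _ => sq_nonneg _))
  have hD2 : ∀ x ∈ Icc (0:ℝ) 1, D 2 u x = 0 :=
    dirichlet_eq_zero hK (fun x hx => hasDerivWithinAt_D hu (n := 2) (by norm_num) hx)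
      (fun x hx => hasDerivWithinAt_D hu (n := 3) (by norm_num) hx)
      (fun x hx => sub_eq_zero.mp (heq x hx)) hw0 hw1
  have hD0 : D 0 u = u := iteratedDerivWithin_zero
  refine dirichlet_eq_zero le_rfl (w₁ := D 1 u) (w₂ := D 2 u) (fun x hx => ?_)
    (fun x hx => hasDerivWithinAt_D hu (n := 1) (by norm_num) hx)
    (fun x hx => by rw [hD2 x (Ioo_subset_Icc_self hx), zero_mul]) hu0 hu1
  have h := hasDerivWithinAt_D hu (n := 0) (by norm_num) hx
  rwa [hD0] at h
end

section
/- Let a > 0 and b ≥ 0 be constants. For every continuous function g : [0,1] → ℝ there exists a function u ∈ C⁴([0,1]) satisfying u''''(x) − (a + b∫₀¹(u'(t))²dt)·u''(x) = g(x) for all x ∈ (0,1) and the boundary conditions u(0) = u(1) = u''(0) = u''(1) = 0. -/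
/-!
For a frozen coefficient `m = k² > 0` the linear problem `u'''' - m u'' = g` with hinged boundary
conditions has an explicit solution: `v = u''` solves `v'' - m v = g`, `v(0) = v(1) = 0`, and is
given by variation of constants with `sinh (k x)`, `cosh (k x)`; if `w'' = g`, `w(0) = w(1) = 0`,
then `u = (v - w) / m`. The nonlocal problem thus reduces to the scalar equation
`a + b E(k) = k²`, where `E(k) = ∫₀¹ (u_k')²`.

The explicit formulas show that `E` is continuous. At `k² = a` the left side is at least the right
side. Testing the equation with `u` gives `∫ (u'')² + m ∫ (u')² = ∫ g u`, and
`|u| ≤ ∫ |u'| ≤ (1 + E) / 2`, so that `E ≤ G / 2` as soon as `m ≥ G / 2 + 1`, where `G` bounds `|g|`;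
hence the left side is at most the right side for `k` large. The intermediate value theorem provides
the required `k`. The parametrization `k = exp s` makes all formulas continuous on the whole line.
-/

open Set MeasureTheory intervalIntegral Real Filter Topology

namespace Kirchhoff

/-- The solution of `p'' - k² p = g` with `p(0) = p'(0) = 0`, by variation of constants. -/
noncomputable def part (g : ℝ → ℝ) (k x : ℝ) : ℝ :=
  (sinh (k * x) * (∫ t in (0:ℝ)..x, cosh (k * t) * g t)
    - cosh (k * x) * ∫ t in (0:ℝ)..x, sinh (k * t) * g t) / k

/-- The derivative of `part g k`. -/
noncomputable def part' (g : ℝ → ℝ) (k x : ℝ) : ℝ :=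
  cosh (k * x) * (∫ t in (0:ℝ)..x, cosh (k * t) * g t)
    - sinh (k * x) * ∫ t in (0:ℝ)..x, sinh (k * t) * g t

/-- The solution of `v'' - k² v = g` with `v(0) = v(1) = 0`. -/
noncomputable def solV (g : ℝ → ℝ) (k x : ℝ) : ℝ :=
  part g k x - part g k 1 / sinh k * sinh (k * x)

/-- The derivative of `solV g k`. -/
noncomputable def solV' (g : ℝ → ℝ) (k x : ℝ) : ℝ :=
  part' g k x - part g k 1 / sinh k * (k * cosh (k * x))

/-- The solution of `w'' = g` with `w(0) = w(1) = 0`. -/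
noncomputable def solW (g : ℝ → ℝ) (x : ℝ) : ℝ :=
  (∫ t in (0:ℝ)..x, ∫ r in (0:ℝ)..t, g r) - x * ∫ t in (0:ℝ)..1, ∫ r in (0:ℝ)..t, g r

/-- The derivative of `solW g`. -/
noncomputable def solW' (g : ℝ → ℝ) (x : ℝ) : ℝ :=
  (∫ r in (0:ℝ)..x, g r) - ∫ t in (0:ℝ)..1, ∫ r in (0:ℝ)..t, g r

/-- The solution of `u'''' - k² u'' = g` with hinged boundary conditions. -/
noncomputable def solU (g : ℝ → ℝ) (k x : ℝ) : ℝ := (solV g k x - solW g x) / k ^ 2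

/-- The derivative of `solU g k`. -/
noncomputable def solU' (g : ℝ → ℝ) (k x : ℝ) : ℝ := (solV' g k x - solW' g x) / k ^ 2

section derivatives

variable {g : ℝ → ℝ} (hg : Continuous g) {k : ℝ} (hk : 0 < k) (x : ℝ)

lemma hasDerivAt_sinh_mul (k x : ℝ) :
    HasDerivAt (fun x => sinh (k * x)) (k * cosh (k * x)) x := by
  simpa [mul_comm] using ((hasDerivAt_id x).const_mul k).sinh

lemma hasDerivAt_cosh_mul (k x : ℝ) :
    HasDerivAt (fun x => cosh (k * x)) (k * sinh (k * x)) x := by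
  simpa [mul_comm] using ((hasDerivAt_id x).const_mul k).cosh

lemma hasDerivAt_integral {f : ℝ → ℝ} (hf : Continuous f) (x : ℝ) :
    HasDerivAt (fun x => ∫ t in (0:ℝ)..x, f t) (f x) x :=
  hf.integral_hasStrictDerivAt 0 x |>.hasDerivAt

include hg in
lemma hasDerivAt_intCosh (k x : ℝ) :
    HasDerivAt (fun x => ∫ t in (0:ℝ)..x, cosh (k * t) * g t) (cosh (k * x) * g x) x :=
  hasDerivAt_integral (f := fun t => cosh (k * t) * g t) (by fun_prop) x

include hg in
lemma hasDerivAt_intSinh (k x : ℝ) :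
    HasDerivAt (fun x => ∫ t in (0:ℝ)..x, sinh (k * t) * g t) (sinh (k * x) * g x) x :=
  hasDerivAt_integral (f := fun t => sinh (k * t) * g t) (by fun_prop) x

include hg hk in
lemma hasDerivAt_part : HasDerivAt (part g k) (part' g k x) x := by
  have := (((hasDerivAt_sinh_mul k x).mul (hasDerivAt_intCosh hg k x)).sub
    ((hasDerivAt_cosh_mul k x).mul (hasDerivAt_intSinh hg k x))).div_const k
  refine this.congr_deriv ?_
  unfold part'
  field_simp
  ring

include hg in
lemma hasDerivAt_part' : HasDerivAt (part' g k) (k ^ 2 * part g k x + g x) x := by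
  have := ((hasDerivAt_cosh_mul k x).mul (hasDerivAt_intCosh hg k x)).sub
    ((hasDerivAt_sinh_mul k x).mul (hasDerivAt_intSinh hg k x))
  refine this.congr_deriv ?_
  unfold part
  field_simp
  linear_combination (g x) * Real.cosh_sq_sub_sinh_sq (k * x)

include hg hk in
lemma hasDerivAt_solV : HasDerivAt (solV g k) (solV' g k x) x :=
  (hasDerivAt_part hg hk x).sub ((hasDerivAt_sinh_mul k x).const_mul _)

include hg in
lemma hasDerivAt_solV' : HasDerivAt (solV' g k) (k ^ 2 * solV g k x + g x) x := by
  refine ((hasDerivAt_part' hg x).sub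
    (((hasDerivAt_cosh_mul k x).const_mul k).const_mul _)).congr_deriv ?_
  unfold solV
  ring

lemma solV_zero : solV g k 0 = 0 := by simp [solV, part]

include hk in
lemma solV_one : solV g k 1 = 0 := by
  have : sinh k ≠ 0 := (Real.sinh_pos_iff.2 hk).ne'
  simp [solV, this]

include hg in
lemma hasDerivAt_solW : HasDerivAt (solW g) (solW' g x) x := by
  have h : Continuous fun t => ∫ r in (0:ℝ)..t, g r :=
    continuous_iff_continuousAt.2 fun t => (hasDerivAt_integral hg t).continuousAt
  refine ((hasDerivAt_integral h x).sub ((hasDerivAt_id x).mul_const _)).congr_deriv ?_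
  rw [one_mul, solW']

include hg in
lemma hasDerivAt_solW' : HasDerivAt (solW' g) (g x) x :=
  (hasDerivAt_integral hg x).sub_const _

include hg hk in
lemma hasDerivAt_solU : HasDerivAt (solU g k) (solU' g k x) x :=
  ((hasDerivAt_solV hg hk x).sub (hasDerivAt_solW hg x)).div_const _

include hg hk in
lemma hasDerivAt_solU' : HasDerivAt (solU' g k) (solV g k x) x := by
  refine (((hasDerivAt_solV' hg x).sub (hasDerivAt_solW' hg x)).div_const _).congr_deriv ?_
  field_simp
  ring

lemma solU_zero : solU g k 0 = 0 := by simp [solU, solV_zero, solW]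

include hk in
lemma solU_one : solU g k 1 = 0 := by simp [solU, solV_one hk, solW]

include hg hk in
lemma continuous_solU' : Continuous (solU' g k) :=
  continuous_iff_continuousAt.2 fun x => (hasDerivAt_solU' hg hk x).continuousAt

end derivatives

lemma continuous_energy {g : ℝ → ℝ} (hg : Continuous g) :
    Continuous fun s => ∫ x in (0:ℝ)..1, (solU' g (exp s) x) ^ 2 := by
  refine continuous_parametric_intervalIntegral_of_continuous' (μ := volume) ?_ 0 1
  have hA {f : ℝ → ℝ} (hf : Continuous f) {e : ℝ × ℝ → ℝ} (he : Continuous e) :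
      Continuous fun p : ℝ × ℝ => ∫ t in (0:ℝ)..e p, f (exp p.1 * t) * g t :=
    continuous_parametric_intervalIntegral_of_continuous (μ := volume)
      (f := fun (p : ℝ × ℝ) t => f (exp p.1 * t) * g t)
      (by simp only [Function.uncurry_def]; fun_prop) he
  have hk (p : ℝ × ℝ) : exp p.1 ≠ 0 := (exp_pos _).ne'
  have hs (p : ℝ × ℝ) : sinh (exp p.1) ≠ 0 := (Real.sinh_pos_iff.2 (exp_pos _)).ne'
  have h1 := hA continuous_cosh continuous_snd
  have h2 := hA continuous_sinh continuous_snd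
  have h3 := hA continuous_cosh (e := fun _ => 1) continuous_const
  have h4 := hA continuous_sinh (e := fun _ => 1) continuous_const
  have hw : Continuous fun p : ℝ × ℝ => solW' g p.2 :=
    (continuous_iff_continuousAt.2 fun x => (hasDerivAt_solW' hg x).continuousAt).comp
      continuous_snd
  have hp : Continuous fun p : ℝ × ℝ => part g (exp p.1) 1 := by
    unfold part
    exact Continuous.div (by fun_prop) (by fun_prop) hk
  have hp' : Continuous fun p : ℝ × ℝ => part' g (exp p.1) p.2 := by
    unfold part'
    fun_prop
  have hq : Continuous fun p : ℝ × ℝ => part g (exp p.1) 1 / sinh (exp p.1) :=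
    hp.div (by fun_prop) hs
  simp only [Function.uncurry_def, solU', solV']
  exact (Continuous.div (by fun_prop) (by fun_prop) fun p => pow_ne_zero 2 (hk p)).pow 2

/-- The a priori bound on `∫₀¹ (u')²` for a large coefficient `k²`, from testing with `u`. -/
lemma energy_le {g : ℝ → ℝ} (hg : Continuous g) {G : ℝ} (hG : ∀ x, |g x| ≤ G) {k : ℝ}
    (hk : 0 < k) (hkG : G / 2 + 1 ≤ k ^ 2) :
    ∫ x in (0:ℝ)..1, (solU' g k x) ^ 2 ≤ G / 2 := by
  have cu : Continuous (solU g k) :=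
    continuous_iff_continuousAt.2 fun x => (hasDerivAt_solU hg hk x).continuousAt
  have cv : Continuous (solV g k) :=
    continuous_iff_continuousAt.2 fun x => (hasDerivAt_solV hg hk x).continuousAt
  have cu' := continuous_solU' hg hk
  have hG0 : 0 ≤ G := (abs_nonneg _).trans (hG 0)
  set E := ∫ x in (0:ℝ)..1, (solU' g k x) ^ 2 with hE
  have hE0 : 0 ≤ E := integral_nonneg zero_le_one fun x _ => sq_nonneg _
  have hu (x : ℝ) (hx : x ∈ Icc (0:ℝ) 1) : |solU g k x| ≤ (1 + E) / 2 := by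
    have h1 : ∫ t in (0:ℝ)..x, solU' g k t = solU g k x := by
      rw [integral_eq_sub_of_hasDerivAt (fun t _ => hasDerivAt_solU hg hk t)
        (cu'.intervalIntegrable _ _), solU_zero, sub_zero]
    have h2 : ∫ t in (0:ℝ)..1, (1 + solU' g k t ^ 2) / 2 = (1 + E) / 2 := by
      rw [intervalIntegral.integral_div, intervalIntegral.integral_add
        (f := fun _ => (1:ℝ)) (g := fun t => solU' g k t ^ 2) (by simp)
        (Continuous.intervalIntegrable (by fun_prop) _ _)]
      simp [hE]
    rw [← h1, ← h2]
    calc _ ≤ ∫ t in (0:ℝ)..x, |solU' g k t| := abs_integral_le_integral_abs hx.1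
      _ ≤ ∫ t in (0:ℝ)..1, |solU' g k t| :=
        integral_mono_interval le_rfl hx.1 hx.2
          (Eventually.of_forall fun t => abs_nonneg _) (cu'.abs.intervalIntegrable _ _)
      _ ≤ _ := by
        refine integral_mono_on zero_le_one (cu'.abs.intervalIntegrable _ _)
          (Continuous.intervalIntegrable (by fun_prop) _ _) fun t _ => ?_
        nlinarith [sq_nonneg (|solU' g k t| - 1), sq_abs (solU' g k t)]
  -- The primitive `u v' - u' v - k² u u'` vanishes at both endpoints.
  have hF : ∫ x in (0:ℝ)..1, (solU g k x * g x - solV g k x ^ 2 - k ^ 2 * solU' g k x ^ 2) = 0 := by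
    rw [integral_eq_sub_of_hasDerivAt
      (f := fun x => solU g k x * solV' g k x - solU' g k x * solV g k x
        - k ^ 2 * (solU g k x * solU' g k x)) (fun x _ => ?_)
      (Continuous.intervalIntegrable (by fun_prop) _ _)]
    · simp [solU_zero, solU_one hk, solV_zero, solV_one hk]
    · refine ((((hasDerivAt_solU hg hk x).mul (hasDerivAt_solV' hg x)).sub
        ((hasDerivAt_solU' hg hk x).mul (hasDerivAt_solV hg hk x))).sub
        (((hasDerivAt_solU hg hk x).mul (hasDerivAt_solU' hg hk x)).const_mul (k ^ 2))).congr_deriv ?_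
      ring
  have hle : ∫ x in (0:ℝ)..1, (solU g k x * g x - solV g k x ^ 2 - k ^ 2 * solU' g k x ^ 2)
      ≤ ∫ x in (0:ℝ)..1, ((1 + E) / 2 * G - k ^ 2 * solU' g k x ^ 2) := by
    refine integral_mono_on zero_le_one (Continuous.intervalIntegrable (by fun_prop) _ _)
      (Continuous.intervalIntegrable (by fun_prop) _ _) fun x hx => ?_
    have : solU g k x * g x ≤ (1 + E) / 2 * G := by
      refine (le_abs_self _).trans ?_
      rw [abs_mul]
      exact mul_le_mul (hu x hx) (hG x) (abs_nonneg _) (by positivity)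
    nlinarith [sq_nonneg (solV g k x)]
  rw [hF, integral_sub (by simp) (Continuous.intervalIntegrable (by fun_prop) _ _),
    intervalIntegral.integral_const, intervalIntegral.integral_const_mul, ← hE] at hle
  simp only [sub_zero, one_smul] at hle
  nlinarith

end Kirchhoff

open Kirchhoff in
/-- For every continuous `g : [0,1] → ℝ` there exists a `C⁴` solution `u`
of the Kirchhoff beam problem `u'''' - (a + b∫₀¹(u')²)u'' = g` with hinged boundary
conditions. -/
theorem stmt1 (a b : ℝ) (ha : 0 < a) (hb : 0 ≤ b) (g : ℝ → ℝ)
    (hg : ContinuousOn g (Set.Icc 0 1)) :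
    ∃ u : ℝ → ℝ, ContDiffOn ℝ 4 u (Set.Icc 0 1) ∧
      (∀ x ∈ Set.Ioo (0:ℝ) 1, D 4 u x - KCoef a b u * D 2 u x = g x) ∧ BC u := by
  -- Only the values of `g` on `[0,1]` matter: pass to a bounded continuous extension `h`.
  obtain ⟨h, hc, hgh, G, hG⟩ : ∃ h : ℝ → ℝ, Continuous h ∧ (∀ x ∈ Icc (0:ℝ) 1, h x = g x) ∧
      ∃ G, ∀ x, |h x| ≤ G := by
    obtain ⟨G, hG⟩ := isCompact_Icc.exists_bound_of_continuousOn hg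
    refine ⟨IccExtend zero_le_one ((Icc (0:ℝ) 1).domRestrict g),
      (continuousOn_iff_continuous_domRestrict.1 hg).Icc_extend', fun x hx => ?_, G, fun x => ?_⟩
    · rw [IccExtend_of_mem _ _ hx]; rfl
    · exact hG _ (projIcc (0:ℝ) 1 zero_le_one x).2
  obtain ⟨s, hs⟩ : ∃ s, a + b * (∫ x in (0:ℝ)..1, (solU' h (exp s) x) ^ 2) = exp s ^ 2 := by
    have hcont : Continuous fun s =>
        a + b * (∫ x in (0:ℝ)..1, (solU' h (exp s) x) ^ 2) - exp s ^ 2 := by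
      have := continuous_energy hc
      fun_prop
    have hexp {m : ℝ} (hm : 0 < m) : exp (log m / 2) ^ 2 = m := by
      rw [← Real.exp_nat_mul]; push_cast
      rw [mul_div_cancel₀ _ two_ne_zero, exp_log hm]
    have hG0 : 0 ≤ G := (abs_nonneg _).trans (hG 0)
    obtain ⟨s, hs⟩ := mem_range_of_exists_le_of_exists_ge hcont (c := 0)
      ⟨log (a + b * (G / 2) + (G / 2 + 1)) / 2, by
        have hm := hexp (m := a + b * (G / 2) + (G / 2 + 1)) (by positivity)
        have := energy_le hc hG (exp_pos (log (a + b * (G / 2) + (G / 2 + 1)) / 2))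
          (by rw [hm]; nlinarith [mul_nonneg hb hG0])
        have := mul_le_mul_of_nonneg_left this hb
        linarith⟩
      ⟨log a / 2, by
        have : 0 ≤ b * ∫ x in (0:ℝ)..1, (solU' h (exp (log a / 2)) x) ^ 2 :=
          mul_nonneg hb (integral_nonneg zero_le_one fun x _ => sq_nonneg _)
        linarith [hexp ha]⟩
    exact ⟨s, by linarith [hs]⟩
  have hk := exp_pos s
  set k := exp s
  have d1 : deriv (solU h k) = solU' h k := funext fun x => (hasDerivAt_solU hc hk x).deriv
  have d2 : deriv (solU' h k) = solV h k := funext fun x => (hasDerivAt_solU' hc hk x).deriv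
  have d3 : deriv (solV h k) = solV' h k := funext fun x => (hasDerivAt_solV hc hk x).deriv
  have d4 : deriv (solV' h k) = fun x => k ^ 2 * solV h k x + h x :=
    funext fun x => (hasDerivAt_solV' hc x).deriv
  have e1 : Differentiable ℝ (solU h k) := fun x => (hasDerivAt_solU hc hk x).differentiableAt
  have e2 : Differentiable ℝ (solU' h k) := fun x => (hasDerivAt_solU' hc hk x).differentiableAt
  have e3 : Differentiable ℝ (solV h k) := fun x => (hasDerivAt_solV hc hk x).differentiableAt
  have e4 : Differentiable ℝ (solV' h k) := fun x => (hasDerivAt_solV' hc x).differentiableAt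
  have hsmooth : ContDiff ℝ 4 (solU h k) := by
    refine contDiff_nat_iff_iteratedDeriv.2 ⟨fun m hm => ?_, fun m hm => ?_⟩ <;>
    interval_cases m <;>
    simp only [iteratedDeriv_succ', iteratedDeriv_zero, d1, d2, d3, d4, e1, e2, e3, e4,
      e1.continuous, e2.continuous, e3.continuous, e4.continuous]
    have := e3.continuous
    fun_prop
  have hD (n : ℕ) (hn : n ≤ 4) (x : ℝ) (hx : x ∈ Icc (0:ℝ) 1) :
      D n (solU h k) x = iteratedDeriv n (solU h k) x :=
    iteratedDerivWithin_eq_iteratedDeriv (uniqueDiffOn_Icc zero_lt_one)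
      (hsmooth.of_le (by exact_mod_cast hn)).contDiffAt hx
  have hD2 (x : ℝ) (hx : x ∈ Icc (0:ℝ) 1) : D 2 (solU h k) x = solV h k x := by
    rw [hD 2 (by norm_num) x hx]
    simp only [iteratedDeriv_succ', iteratedDeriv_zero, d1, d2]
  have hK : KCoef a b (solU h k) = k ^ 2 := by
    rw [← hs, KCoef]
    congr 2
    refine integral_congr fun x hx => ?_
    rw [uIcc_of_le zero_le_one] at hx
    simp only [hD 1 (by norm_num) x hx, iteratedDeriv_one, d1]
  refine ⟨solU h k, hsmooth.contDiffOn, fun x hx => ?_, solU_zero, solU_one hk, ?_, ?_⟩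
  · have hx' := Ioo_subset_Icc_self hx
    rw [hK, hD2 x hx', hD 4 le_rfl x hx', ← hgh x hx']
    simp only [iteratedDeriv_succ', iteratedDeriv_zero, d1, d2, d3, d4]
    ring
  · rw [hD2 0 (by simp), solV_zero]
  · rw [hD2 1 (by simp), solV_one hk]
end

section
/- Let a > 0 and b ≥ 0 be constants and let g : [0,1] → ℝ be continuous with either g(x) ≥ 0 for all x ∈ [0,1] or g(x) ≤ 0 for all x ∈ [0,1]. If u, v ∈ C⁴([0,1]) both satisfy w''''(x) − (a + b∫₀¹(w'(t))²dt)·w''(x) = g(x) on (0,1) with w(0) = w(1) = w''(0) = w''(1) = 0, then u = v. -/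
/-!
Write `M`, `N` for the Kirchhoff coefficients of `u`, `v`, and put `p = -u''`, `q = -v''`. Replacing
`u, v, g` by their negatives and exchanging `u` and `v`, one may assume `0 ≤ g` and `M ≤ N`.
Then `-p'' + M p = g`, `-q'' + N q = g`, and `p`, `q` vanish at the endpoints, so the maximum
principle (`nonneg_of_superharmonic`) gives `0 ≤ q`. Since `-(p - q)'' + M (p - q) = (N - M) q ≥ 0`,
it also gives `q ≤ p`, and, applied to `v` and `u - v` with zeroth-order coefficient `0`,
`0 ≤ v ≤ u`. Integrating by parts,
`∫ u'² = ∫ u p ≥ ∫ v q = ∫ v'²` (`integral_D_one_sq`), hence `M ≥ N`.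
So `M = N`, and the same comparison with the roles of `u` and `v` exchanged gives `u ≤ v`.
-/

open Set MeasureTheory intervalIntegral Real Filter Topology

/-- A function with zero boundary values whose second derivative is negative wherever the function
itself is negative has no negative interior minimum, hence is nonnegative. -/
lemma nonneg_of_strict {f f' f'' : ℝ → ℝ} (hc : ContinuousOn f (Icc 0 1))
    (h1 : ∀ x ∈ Ioo (0:ℝ) 1, HasDerivAt f (f' x) x)
    (h2 : ∀ x ∈ Ioo (0:ℝ) 1, HasDerivAt f' (f'' x) x)
    (h0 : f 0 = 0) (h1' : f 1 = 0)
    (hneg : ∀ x ∈ Ioo (0:ℝ) 1, f x < 0 → f'' x < 0) :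
    ∀ x ∈ Icc (0:ℝ) 1, 0 ≤ f x := by
  obtain ⟨m, hm, hmin⟩ := isCompact_Icc.exists_isMinOn (nonempty_Icc.2 zero_le_one) hc
  intro x hx
  refine le_trans ?_ (hmin hx)
  by_contra! hlt
  have hmI : m ∈ Ioo (0:ℝ) 1 := by
    refine ⟨lt_of_le_of_ne hm.1 ?_, lt_of_le_of_ne hm.2 ?_⟩
    · rintro rfl; linarith
    · rintro rfl; linarith
  have hnhds : Ioo (0:ℝ) 1 ∈ 𝓝 m := Ioo_mem_nhds hmI.1 hmI.2
  have hlmin : IsLocalMin f m := hmin.isLocalMin (Icc_mem_nhds hmI.1 hmI.2)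
  have hd : deriv f =ᶠ[𝓝 m] f' := by
    filter_upwards [hnhds] with y hy using (h1 y hy).deriv
  have hdd : deriv (deriv f) m = f'' m := by rw [hd.deriv_eq, (h2 m hmI).deriv]
  have hlt2 := hneg m hmI hlt
  have hlmax : IsLocalMax f m :=
    isLocalMax_of_deriv_deriv_neg (by rw [hdd]; exact hlt2) hlmin.deriv_eq_zero
      (h1 m hmI).continuousAt
  -- Being both a local minimum and a local maximum, `m` has a neighbourhood where `f` is constant.
  have hconst : f =ᶠ[𝓝 m] fun _ => f m := by
    filter_upwards [hlmin, hlmax] with y hy1 hy2 using le_antisymm hy2 hy1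
  have hz : deriv (deriv f) m = 0 := by
    rw [hconst.deriv.deriv_eq]; simp
  rw [hdd] at hz
  linarith

/-- Maximum principle for `-f'' + c f` with `c ≥ 0` and zero Dirichlet data. The case `c = 0`
is covered by adding the strictly concave perturbation `ε x (1 - x)`. -/
lemma nonneg_of_superharmonic {f f' f'' : ℝ → ℝ} {c : ℝ} (hc0 : 0 ≤ c)
    (hc : ContinuousOn f (Icc 0 1))
    (h1 : ∀ x ∈ Ioo (0:ℝ) 1, HasDerivAt f (f' x) x)
    (h2 : ∀ x ∈ Ioo (0:ℝ) 1, HasDerivAt f' (f'' x) x)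
    (h0 : f 0 = 0) (h1' : f 1 = 0)
    (hsup : ∀ x ∈ Ioo (0:ℝ) 1, f'' x ≤ c * f x) :
    ∀ x ∈ Icc (0:ℝ) 1, 0 ≤ f x := by
  intro x hx
  refine le_of_forall_pos_le_add fun ε hε => ?_
  have key := nonneg_of_strict (f := fun x => f x + ε * (x * (1 - x)))
    (f' := fun x => f' x + ε * (1 - 2 * x)) (f'' := fun x => f'' x + ε * (-2))
    (hc.add (by fun_prop)) ?_ ?_ (by simp [h0]) (by simp [h1']) ?_ x hx
  · have : ε * (x * (1 - x)) ≤ ε * 1 :=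
      mul_le_mul_of_nonneg_left (by nlinarith [hx.1, hx.2, sq_nonneg x]) hε.le
    linarith
  · intro y hy
    refine (h1 y hy).add (HasDerivAt.const_mul ε ?_)
    exact ((hasDerivAt_id' y).fun_mul ((hasDerivAt_id' y).const_sub 1)).congr_deriv (by ring)
  · intro y hy
    refine (h2 y hy).add (HasDerivAt.const_mul ε ?_)
    exact (((hasDerivAt_id' y).const_mul 2).const_sub 1).congr_deriv (by ring)
  · intro y hy hlt
    have h3 : 0 ≤ ε * (y * (1 - y)) :=
      mul_nonneg hε.le (mul_nonneg hy.1.le (by linarith [hy.2]))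
    have h4 := hsup y hy
    have h5 : c * f y ≤ 0 := mul_nonpos_of_nonneg_of_nonpos hc0 (by linarith)
    linarith

lemma D_zero (u : ℝ → ℝ) : D 0 u = u := iteratedDerivWithin_zero

lemma D_neg (n : ℕ) (u : ℝ → ℝ) : D n (fun x => -u x) = fun x => -D n u x := by
  ext x
  exact iteratedDerivWithin_fun_neg u

lemma D_continuousOn {u : ℝ → ℝ} (hu : ContDiffOn ℝ 4 u (Icc 0 1)) {n : ℕ} (hn : n ≤ 4) :
    ContinuousOn (D n u) (Icc 0 1) :=
  hu.continuousOn_iteratedDerivWithin (by exact_mod_cast hn) (uniqueDiffOn_Icc zero_lt_one)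

/-- In the interior, the one-sided derivatives in the definition of `D` are genuine ones. -/
lemma D_hasDerivAt {u : ℝ → ℝ} (hu : ContDiffOn ℝ 4 u (Icc 0 1)) {n : ℕ} (hn : n < 4)
    {x : ℝ} (hx : x ∈ Ioo (0:ℝ) 1) : HasDerivAt (D n u) (D (n + 1) u x) x := by
  have hd := hu.differentiableOn_iteratedDerivWithin (m := n) (by exact_mod_cast hn)
    (uniqueDiffOn_Icc zero_lt_one)
  have h := (hd x (Ioo_subset_Icc_self hx)).hasDerivWithinAt
  rw [← iteratedDerivWithin_succ] at h
  exact h.hasDerivAt (Icc_mem_nhds hx.1 hx.2)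

/-- Integration by parts: the boundary terms of `u u'` vanish. -/
lemma integral_D_one_sq {u : ℝ → ℝ} (hu : ContDiffOn ℝ 4 u (Icc 0 1)) (hbc : BC u) :
    ∫ t in (0:ℝ)..1, (D 1 u t) ^ 2 = ∫ t in (0:ℝ)..1, u t * -D 2 u t := by
  have c0 : ContinuousOn u (Icc 0 1) := hu.continuousOn
  have c1 := D_continuousOn hu (n := 1) (by norm_num)
  have c2 := D_continuousOn hu (n := 2) (by norm_num)
  have i1 : IntervalIntegrable (fun t => (D 1 u t) ^ 2) volume 0 1 :=
    (c1.pow 2).intervalIntegrable_of_Icc zero_le_one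
  have i2 : IntervalIntegrable (fun t => u t * -D 2 u t) volume 0 1 :=
    (c0.mul c2.neg).intervalIntegrable_of_Icc zero_le_one
  have h := integral_eq_sub_of_hasDerivAt_of_le (f := fun t => u t * D 1 u t)
    (f' := fun t => (D 1 u t) ^ 2 - u t * -D 2 u t) zero_le_one (c0.mul c1) ?_ (i1.sub i2)
  · rw [intervalIntegral.integral_sub i1 i2] at h
    simp only [hbc.1, hbc.2.1] at h
    linarith
  · intro x hx
    have d0 := D_hasDerivAt hu (n := 0) (by norm_num) hx
    rw [D_zero] at d0
    refine (d0.fun_mul (D_hasDerivAt hu (n := 1) (by norm_num) hx)).congr_deriv ?_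
    simp only [zero_add, Nat.reduceAdd]
    ring

lemma KCoef_nonneg {a b : ℝ} (ha : 0 < a) (hb : 0 ≤ b) (u : ℝ → ℝ) : 0 ≤ KCoef a b u :=
  add_nonneg ha.le (mul_nonneg hb
    (intervalIntegral.integral_nonneg zero_le_one fun _ _ => sq_nonneg _))

/-- A function with zero boundary values and nonpositive second derivative is nonnegative,
stated for a difference `u - v`. -/
lemma le_of_D_two_le {u v : ℝ → ℝ} (hu : ContDiffOn ℝ 4 u (Icc 0 1)) (hbcu : BC u)
    (hv : ContDiffOn ℝ 4 v (Icc 0 1)) (hbcv : BC v)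
    (h : ∀ x ∈ Icc (0:ℝ) 1, D 2 u x ≤ D 2 v x) : ∀ x ∈ Icc (0:ℝ) 1, v x ≤ u x := by
  intro x hx
  have := nonneg_of_superharmonic (f := fun x => D 0 u x - D 0 v x) (c := 0) le_rfl
    ((D_continuousOn hu (by norm_num)).sub (D_continuousOn hv (by norm_num)))
    (fun y hy => (D_hasDerivAt hu (by norm_num) hy).sub (D_hasDerivAt hv (by norm_num) hy))
    (fun y hy => (D_hasDerivAt hu (by norm_num) hy).sub (D_hasDerivAt hv (by norm_num) hy))
    (by simp [D_zero, hbcu.1, hbcv.1]) (by simp [D_zero, hbcu.2.1, hbcv.2.1])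
    (fun y hy => by
      have := h y (Ioo_subset_Icc_self hy)
      simp only [zero_add, Nat.reduceAdd]
      linarith) x hx
  simp only [D_zero] at this
  linarith

lemma D_two_zero : D 2 (fun _ => 0) = fun _ => 0 := by
  ext x
  simp [D]

lemma BC_zero : BC (fun _ => 0) :=
  ⟨rfl, rfl, by rw [D_two_zero], by rw [D_two_zero]⟩

/-- For `g ≥ 0`, solutions are concave: the maximum principle applied to `-u''`. -/
lemma D_two_nonpos {M : ℝ} (hM : 0 ≤ M) {g u : ℝ → ℝ} (hg : ∀ x ∈ Icc (0:ℝ) 1, 0 ≤ g x)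
    (hu : ContDiffOn ℝ 4 u (Icc 0 1)) (hbcu : BC u)
    (hequ : ∀ x ∈ Ioo (0:ℝ) 1, D 4 u x - M * D 2 u x = g x) :
    ∀ x ∈ Icc (0:ℝ) 1, D 2 u x ≤ 0 := by
  intro x hx
  have := nonneg_of_superharmonic (f := fun x => -D 2 u x) hM
    (D_continuousOn hu (by norm_num)).neg
    (fun y hy => (D_hasDerivAt hu (by norm_num) hy).neg)
    (fun y hy => (D_hasDerivAt hu (by norm_num) hy).neg)
    (by simp [hbcu.2.2.1]) (by simp [hbcu.2.2.2])
    (fun y hy => by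
      have h1 := hequ y hy
      have h2 := hg y (Ioo_subset_Icc_self hy)
      simp only [Nat.reduceAdd]
      linarith) x hx
  linarith

/-- Comparison for `g ≥ 0`: the solution of the linear problem with the smaller coefficient has
the smaller second derivative. -/
lemma D_two_le {M N : ℝ} (hM : 0 ≤ M) (hMN : M ≤ N) {g u v : ℝ → ℝ}
    (hg : ∀ x ∈ Icc (0:ℝ) 1, 0 ≤ g x)
    (hu : ContDiffOn ℝ 4 u (Icc 0 1)) (hbcu : BC u)
    (hequ : ∀ x ∈ Ioo (0:ℝ) 1, D 4 u x - M * D 2 u x = g x)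
    (hv : ContDiffOn ℝ 4 v (Icc 0 1)) (hbcv : BC v)
    (heqv : ∀ x ∈ Ioo (0:ℝ) 1, D 4 v x - N * D 2 v x = g x) :
    ∀ x ∈ Icc (0:ℝ) 1, D 2 u x ≤ D 2 v x := by
  intro x hx
  have hq := D_two_nonpos (hM.trans hMN) hg hv hbcv heqv
  have := nonneg_of_superharmonic (f := fun x => D 2 v x - D 2 u x) hM
    ((D_continuousOn hv (by norm_num)).sub (D_continuousOn hu (by norm_num)))
    (fun y hy => (D_hasDerivAt hv (by norm_num) hy).sub (D_hasDerivAt hu (by norm_num) hy))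
    (fun y hy => (D_hasDerivAt hv (by norm_num) hy).sub (D_hasDerivAt hu (by norm_num) hy))
    (by simp [hbcu.2.2.1, hbcv.2.2.1]) (by simp [hbcu.2.2.2, hbcv.2.2.2])
    (fun y hy => by
      have h1 := hequ y hy
      have h2 := heqv y hy
      have h3 := mul_nonneg (sub_nonneg.2 hMN)
        (neg_nonneg.2 (hq y (Ioo_subset_Icc_self hy)))
      simp only [Nat.reduceAdd]
      linarith) x hx
  linarith

/-- For `g ≥ 0`, a smaller Kirchhoff coefficient forces a larger Dirichlet energy `∫ w'²`,
so `KCoef a b u < KCoef a b v` is impossible. By symmetry the two coefficients are equal. -/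
lemma KCoef_le {a b : ℝ} (ha : 0 < a) (hb : 0 ≤ b) {g u v : ℝ → ℝ}
    (hg : ∀ x ∈ Icc (0:ℝ) 1, 0 ≤ g x)
    (hu : ContDiffOn ℝ 4 u (Icc 0 1)) (hbcu : BC u)
    (hequ : ∀ x ∈ Ioo (0:ℝ) 1, D 4 u x - KCoef a b u * D 2 u x = g x)
    (hv : ContDiffOn ℝ 4 v (Icc 0 1)) (hbcv : BC v)
    (heqv : ∀ x ∈ Ioo (0:ℝ) 1, D 4 v x - KCoef a b v * D 2 v x = g x) :
    KCoef a b v ≤ KCoef a b u := by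
  by_contra! hlt
  refine hlt.not_ge ?_
  have hqp := D_two_le (KCoef_nonneg ha hb u) hlt.le hg hu hbcu hequ hv hbcv heqv
  have hq := D_two_nonpos (KCoef_nonneg ha hb v) hg hv hbcv heqv
  have hvu := le_of_D_two_le hu hbcu hv hbcv hqp
  have hv0 := le_of_D_two_le hv hbcv contDiffOn_const BC_zero (fun x hx => by
    simpa [D_two_zero] using hq x hx)
  unfold KCoef
  rw [integral_D_one_sq hu hbcu, integral_D_one_sq hv hbcv]
  gcongr
  refine intervalIntegral.integral_mono_on zero_le_one ?_ ?_ fun x hx => ?_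
  · exact (hv.continuousOn.mul
      (D_continuousOn hv (by norm_num)).neg).intervalIntegrable_of_Icc zero_le_one
  · exact (hu.continuousOn.mul
      (D_continuousOn hu (by norm_num)).neg).intervalIntegrable_of_Icc zero_le_one
  · exact mul_le_mul (hvu x hx) (neg_le_neg (hqp x hx)) (neg_nonneg.2 (hq x hx))
      ((hv0 x hx).trans (hvu x hx))

lemma eqOn_of_nonneg {a b : ℝ} (ha : 0 < a) (hb : 0 ≤ b) {g u v : ℝ → ℝ}
    (hg : ∀ x ∈ Icc (0:ℝ) 1, 0 ≤ g x)
    (hu : ContDiffOn ℝ 4 u (Icc 0 1)) (hbcu : BC u)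
    (hequ : ∀ x ∈ Ioo (0:ℝ) 1, D 4 u x - KCoef a b u * D 2 u x = g x)
    (hv : ContDiffOn ℝ 4 v (Icc 0 1)) (hbcv : BC v)
    (heqv : ∀ x ∈ Ioo (0:ℝ) 1, D 4 v x - KCoef a b v * D 2 v x = g x) :
    EqOn u v (Icc 0 1) := by
  have h1 := KCoef_le ha hb hg hu hbcu hequ hv hbcv heqv
  have h2 := KCoef_le ha hb hg hv hbcv heqv hu hbcu hequ
  have d1 := D_two_le (KCoef_nonneg ha hb u) h2 hg hu hbcu hequ hv hbcv heqv
  have d2 := D_two_le (KCoef_nonneg ha hb v) h1 hg hv hbcv heqv hu hbcu hequ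
  exact fun x hx => le_antisymm (le_of_D_two_le hv hbcv hu hbcu d2 x hx)
    (le_of_D_two_le hu hbcu hv hbcv d1 x hx)

lemma KCoef_neg (a b : ℝ) (u : ℝ → ℝ) : KCoef a b (fun x => -u x) = KCoef a b u := by
  simp [KCoef, D_neg]

lemma BC_neg {u : ℝ → ℝ} (h : BC u) : BC (fun x => -u x) := by
  simpa [BC, D_neg] using h

/-- If `g` is continuous and of one sign on `[0,1]`, then the solution of the
Kirchhoff beam problem with right-hand side `g` is unique. -/
theorem stmt2 (a b : ℝ) (ha : 0 < a) (hb : 0 ≤ b) (g : ℝ → ℝ)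
    (hg : ContinuousOn g (Set.Icc 0 1))
    (hsign : (∀ x ∈ Set.Icc (0:ℝ) 1, 0 ≤ g x) ∨ (∀ x ∈ Set.Icc (0:ℝ) 1, g x ≤ 0))
    (u v : ℝ → ℝ)
    (hu : ContDiffOn ℝ 4 u (Set.Icc 0 1))
    (hequ : ∀ x ∈ Set.Ioo (0:ℝ) 1, D 4 u x - KCoef a b u * D 2 u x = g x)
    (hbcu : BC u)
    (hv : ContDiffOn ℝ 4 v (Set.Icc 0 1))
    (heqv : ∀ x ∈ Set.Ioo (0:ℝ) 1, D 4 v x - KCoef a b v * D 2 v x = g x)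
    (hbcv : BC v) :
    Set.EqOn u v (Set.Icc 0 1) := by
  rcases hsign with hs | hs
  · exact eqOn_of_nonneg ha hb hs hu hbcu hequ hv hbcv heqv
  · have h := eqOn_of_nonneg (g := fun x => -g x) (u := fun x => -u x) (v := fun x => -v x) ha hb
      (fun x hx => neg_nonneg.2 (hs x hx)) hu.neg (BC_neg hbcu)
      (fun x hx => by rw [KCoef_neg, D_neg, D_neg, ← hequ x hx]; ring)
      hv.neg (BC_neg hbcv)
      (fun x hx => by rw [KCoef_neg, D_neg, D_neg, ← heqv x hx]; ring)
    exact fun x hx => neg_injective (h hx)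
end

section
/- Let a > 0 and b ≥ 0 be constants and let g : [0,1] → ℝ be continuous with g(x) ≥ 0 for all x ∈ [0,1]. If u ∈ C⁴([0,1]) satisfies u''''(x) − (a + b∫₀¹(u'(t))²dt)·u''(x) = g(x) on (0,1) with u(0) = u(1) = u''(0) = u''(1) = 0, then u(x) ≥ 0 and u''(x) ≤ 0 for all x ∈ [0,1]. -/
/-!
Write `w = u''` and `K = a + b ∫₀¹ (u')² > 0`. The equation says `w'' = K w + g ≥ K w` on `(0,1)`,
with `w = 0` at the endpoints. If `w` were positive somewhere, it would attain a positive maximum at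
an interior point, where `w'' ≥ K w > 0`, contradicting the second derivative test
(`nonpos_of_deriv2_pos`). Hence `u'' = w ≤ 0`, so `u` is concave on `[0,1]`, and since it vanishes
at both endpoints it is nonnegative.
-/

open Set MeasureTheory intervalIntegral Real Filter Topology

/-- Inside `(0,1)` the one-sided iterated derivatives are genuine derivatives of one another. -/
lemma hasDerivAt_D {u : ℝ → ℝ} {N n : ℕ} (hu : ContDiffOn ℝ N u (Set.Icc 0 1)) (hn : n < N)
    {x : ℝ} (hx : x ∈ Set.Ioo (0:ℝ) 1) : HasDerivAt (D n u) (D (n + 1) u x) x := by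
  have hd := hu.differentiableOn_iteratedDerivWithin (m := n) (by exact_mod_cast hn)
    (uniqueDiffOn_Icc one_pos) x (Ioo_subset_Icc_self hx)
  have h := hd.hasDerivWithinAt.hasDerivAt (Icc_mem_nhds hx.1 hx.2)
  rw [← iteratedDerivWithin_succ] at h
  exact h

lemma continuousOn_D {u : ℝ → ℝ} {N n : ℕ} (hu : ContDiffOn ℝ N u (Set.Icc 0 1)) (hn : n ≤ N) :
    ContinuousOn (D n u) (Set.Icc 0 1) :=
  hu.continuousOn_iteratedDerivWithin (by exact_mod_cast hn) (uniqueDiffOn_Icc one_pos)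

/-- Maximum principle: a function vanishing at both endpoints whose second derivative is positive
wherever the function is positive has no positive values. -/
lemma nonpos_of_deriv2_pos {f f' f'' : ℝ → ℝ} (hc : ContinuousOn f (Set.Icc 0 1))
    (h0 : f 0 = 0) (h1 : f 1 = 0)
    (hf : ∀ x ∈ Set.Ioo (0:ℝ) 1, HasDerivAt f (f' x) x)
    (hf' : ∀ x ∈ Set.Ioo (0:ℝ) 1, HasDerivAt f' (f'' x) x)
    (hpos : ∀ x ∈ Set.Ioo (0:ℝ) 1, 0 < f x → 0 < f'' x) :
    ∀ x ∈ Set.Icc (0:ℝ) 1, f x ≤ 0 := by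
  intro x hx
  by_contra! hfx
  obtain ⟨c, hcm, hmax⟩ := isCompact_Icc.exists_isMaxOn ⟨x, hx⟩ hc
  have hfc : 0 < f c := hfx.trans_le (hmax hx)
  have hcI : c ∈ Set.Ioo (0:ℝ) 1 := by
    refine ⟨lt_of_le_of_ne hcm.1 ?_, lt_of_le_of_ne hcm.2 ?_⟩
    · rintro rfl; exact hfc.ne' h0
    · rintro rfl; exact hfc.ne' h1
  have hlmax : IsLocalMax f c := hmax.isLocalMax (Icc_mem_nhds hcI.1 hcI.2)
  have hderiv : deriv f =ᶠ[𝓝 c] f' := by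
    filter_upwards [isOpen_Ioo.mem_nhds hcI] with y hy using (hf y hy).deriv
  have hdd : deriv (deriv f) c = f'' c := by rw [hderiv.deriv_eq, (hf' c hcI).deriv]
  have hlmin : IsLocalMin f c :=
    isLocalMin_of_deriv_deriv_pos (hdd ▸ hpos c hcI hfc) hlmax.deriv_eq_zero
      (hf c hcI).continuousAt
  -- a point that is both a local maximum and a local minimum has a locally constant neighbourhood
  have hconst : f =ᶠ[𝓝 c] fun _ => f c := by
    filter_upwards [hlmax, hlmin] with y hy1 hy2 using le_antisymm hy1 hy2
  have hzero : deriv (deriv f) c = 0 := by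
    rw [hconst.deriv.deriv_eq]
    simp
  have := hpos c hcI hfc
  linarith

/-- If `g ≥ 0` on `[0,1]` and `u ∈ C⁴([0,1])` solves the Kirchhoff beam
problem with right-hand side `g`, then `u ≥ 0` and `u'' ≤ 0` on `[0,1]`. -/
theorem stmt3 (a b : ℝ) (ha : 0 < a) (hb : 0 ≤ b) (g : ℝ → ℝ)
    (hg : ContinuousOn g (Set.Icc 0 1))
    (hgpos : ∀ x ∈ Set.Icc (0:ℝ) 1, 0 ≤ g x)
    (u : ℝ → ℝ)
    (hu : ContDiffOn ℝ 4 u (Set.Icc 0 1))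
    (hequ : ∀ x ∈ Set.Ioo (0:ℝ) 1, D 4 u x - KCoef a b u * D 2 u x = g x)
    (hbcu : BC u) :
    ∀ x ∈ Set.Icc (0:ℝ) 1, 0 ≤ u x ∧ D 2 u x ≤ 0 := by
  have hu' : ContDiffOn ℝ (4 : ℕ) u (Set.Icc 0 1) := by exact_mod_cast hu
  obtain ⟨hu0, hu1, hw0, hw1⟩ := hbcu
  have hK : 0 < KCoef a b u := by
    have : 0 ≤ ∫ t in (0:ℝ)..1, (D 1 u t) ^ 2 :=
      intervalIntegral.integral_nonneg zero_le_one fun t _ => sq_nonneg _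
    unfold KCoef
    positivity
  have hw : ∀ x ∈ Set.Icc (0:ℝ) 1, D 2 u x ≤ 0 := by
    refine nonpos_of_deriv2_pos (continuousOn_D hu' (by norm_num)) hw0 hw1
      (fun x hx => hasDerivAt_D hu' (by norm_num) hx)
      (fun x hx => hasDerivAt_D hu' (by norm_num) hx) fun x hx hpos => ?_
    have h1 := hequ x hx
    have h2 := hgpos x (Ioo_subset_Icc_self hx)
    have h3 := mul_pos hK hpos
    change 0 < D 4 u x
    linarith
  have hD0 : D 0 u = u := iteratedDerivWithin_zero
  have hconc : ConcaveOn ℝ (Set.Icc 0 1) u := by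
    refine concaveOn_of_hasDerivWithinAt2_nonpos (f' := D 1 u) (f'' := D 2 u) (convex_Icc 0 1)
      hu.continuousOn ?_ ?_ ?_ <;> rw [interior_Icc] <;> intro x hx
    · have h := hasDerivAt_D hu' (n := 0) (by norm_num) hx
      rw [hD0] at h
      exact h.hasDerivWithinAt
    · exact (hasDerivAt_D hu' (n := 1) (by norm_num) hx).hasDerivWithinAt
    · exact hw x (Ioo_subset_Icc_self hx)
  intro x hx
  refine ⟨?_, hw x hx⟩
  have h := hconc.min_le_of_mem_Icc (left_mem_Icc.2 zero_le_one) (right_mem_Icc.2 zero_le_one) hx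
  rwa [hu0, hu1, min_self] at h
end

section
/- Let m > 0 and let g : [0,1] → ℝ be continuous. Define G₁(x,t) = t(1−x) for 0 ≤ t ≤ x ≤ 1 and G₁(x,t) = x(1−t) for 0 ≤ x ≤ t ≤ 1, and define G₂(t,s) = sinh(√m·t)·sinh(√m·(1−s))/(√m·sinh(√m)) for 0 ≤ t ≤ s ≤ 1 and G₂(t,s) = sinh(√m·s)·sinh(√m·(1−t))/(√m·sinh(√m)) for 0 ≤ s ≤ t ≤ 1. Then the function u(x) = ∫₀¹∫₀¹ G₁(x,t)·G₂(t,s)·g(s) ds dt is of class C⁴([0,1]), satisfies u''''(x) − m·u''(x) = g(x) for all x ∈ (0,1) and u(0) = u(1) = u''(0) = u''(1) = 0, and moreover u''(x) = −∫₀¹ G₂(x,s)·g(s) ds for all x ∈ [0,1]. -/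
/-!
Both `G1` and `G2` have the form `K x s = p (min x s) * q (max x s)`, where `p` and `q` solve
`y'' = c * y`, `p 0 = 0`, `q 1 = 0` and the Wronskian `p' * q - p * q'` is `1`. Splitting the
integral at `x` gives `∫ K x s * f s = q x * ∫₀ˣ p * f + p x * ∫ₓ¹ q * f`; differentiating twice
shows that this solves `w'' = c * w - f` with zero boundary values (`green_solves`).

After `g` is extended continuously to `ℝ`, the lemma with `c = m` gives `w = ∫ G2 * g`, and with
`c = 0` and right-hand side `w` gives `U` with `U'' = -w` that agrees with `u` on `[0,1]`. Thus
`U'''' = -w'' = g - m * w`. As `U` is `C⁴` on all of `ℝ`, its ordinary derivatives are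
the one-sided derivatives of `u` on `[0,1]`.
-/

open Set MeasureTheory intervalIntegral Real Filter Topology

/-- Green function of `-u'' = 0` on `(0,1)` with `u(0) = u(1) = 0`. -/
noncomputable def G1 (x t : ℝ) : ℝ :=
  if t ≤ x then t * (1 - x) else x * (1 - t)

/-- Green function of `-w'' + m·w = 0` on `(0,1)` with `w(0) = w(1) = 0`. -/
noncomputable def G2 (m t s : ℝ) : ℝ :=
  if t ≤ s then
    Real.sinh (Real.sqrt m * t) * Real.sinh (Real.sqrt m * (1 - s)) /
      (Real.sqrt m * Real.sinh (Real.sqrt m))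
  else
    Real.sinh (Real.sqrt m * s) * Real.sinh (Real.sqrt m * (1 - t)) /
      (Real.sqrt m * Real.sinh (Real.sqrt m))

/-- Variation of parameters: a kernel `K x s = p (min x s) * q (max x s)` built from solutions of
`y'' = c * y` with `p 0 = q 1 = 0` and unit Wronskian inverts `-w'' + c * w = f` with zero boundary
values. The solution `w` and its derivative `w'` are provided on all of `ℝ`. -/
lemma green_solves {p q p' q' f : ℝ → ℝ} {c : ℝ} {K : ℝ → ℝ → ℝ}
    (hp : ∀ x, HasDerivAt p (p' x) x) (hp' : ∀ x, HasDerivAt p' (c * p x) x)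
    (hq : ∀ x, HasDerivAt q (q' x) x) (hq' : ∀ x, HasDerivAt q' (c * q x) x)
    (hW : ∀ x, p' x * q x - p x * q' x = 1) (hf : Continuous f)
    (hp0 : p 0 = 0) (hq1 : q 1 = 0)
    (hK₁ : ∀ x s, x ≤ s → K x s = p x * q s) (hK₂ : ∀ x s, s ≤ x → K x s = p s * q x) :
    ∃ w w' : ℝ → ℝ, (∀ x, HasDerivAt w (w' x) x) ∧ (∀ x, HasDerivAt w' (c * w x - f x) x) ∧
      w 0 = 0 ∧ w 1 = 0 ∧
      ∀ x ∈ Set.Icc (0:ℝ) 1, ∫ s in (0:ℝ)..1, K x s * f s = w x := by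
  have cp : Continuous p := continuous_iff_continuousAt.2 fun x => (hp x).continuousAt
  have cq : Continuous q := continuous_iff_continuousAt.2 fun x => (hq x).continuousAt
  have cpf : Continuous fun s => p s * f s := cp.mul hf
  have cqf : Continuous fun s => q s * f s := cq.mul hf
  have hP : ∀ x, HasDerivAt (fun x => ∫ s in (0:ℝ)..x, p s * f s) (p x * f x) x := fun x =>
    cpf.integral_hasStrictDerivAt 0 x |>.hasDerivAt
  have hQ : ∀ x, HasDerivAt (fun x => ∫ s in x..(1:ℝ), q s * f s) (-(q x * f x)) x := fun x =>
    intervalIntegral.integral_hasDerivAt_left (cqf.intervalIntegrable _ _)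
      cqf.aestronglyMeasurable.stronglyMeasurableAtFilter cqf.continuousAt
  refine ⟨fun x => q x * (∫ s in (0:ℝ)..x, p s * f s) + p x * ∫ s in x..(1:ℝ), q s * f s,
    fun x => q' x * (∫ s in (0:ℝ)..x, p s * f s) + p' x * ∫ s in x..(1:ℝ), q s * f s,
    fun x => ?_, fun x => ?_, by simp [hp0], by simp [hq1], ?_⟩
  · exact (((hq x).mul (hP x)).add ((hp x).mul (hQ x))).congr_deriv (by ring)
  · refine (((hq' x).mul (hP x)).add ((hp' x).mul (hQ x))).congr_deriv ?_
    linear_combination (-f x) * hW x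
  · rintro x ⟨hx0, hx1⟩
    have e₁ : EqOn (fun s => K x s * f s) (fun s => q x * (p s * f s)) (uIcc 0 x) := by
      intro s hs
      rw [uIcc_of_le hx0] at hs
      simp only [hK₂ x s hs.2]; ring
    have e₂ : EqOn (fun s => K x s * f s) (fun s => p x * (q s * f s)) (uIcc x 1) := by
      intro s hs
      rw [uIcc_of_le hx1] at hs
      simp only [hK₁ x s hs.1]; ring
    have i₁ : IntervalIntegrable (fun s => K x s * f s) volume 0 x :=
      ((cpf.const_mul (q x)).continuousOn.congr e₁).intervalIntegrable
    have i₂ : IntervalIntegrable (fun s => K x s * f s) volume x 1 :=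
      ((cqf.const_mul (p x)).continuousOn.congr e₂).intervalIntegrable
    rw [← intervalIntegral.integral_add_adjacent_intervals i₁ i₂,
      intervalIntegral.integral_congr e₁, intervalIntegral.integral_congr e₂,
      intervalIntegral.integral_const_mul, intervalIntegral.integral_const_mul]

/-- `green_solves` for the kernel `G1`, with `p x = x`, `q x = 1 - x` and `c = 0`. -/
lemma G1_solves {f : ℝ → ℝ} (hf : Continuous f) :
    ∃ w w' : ℝ → ℝ, (∀ x, HasDerivAt w (w' x) x) ∧ (∀ x, HasDerivAt w' (-f x) x) ∧
      w 0 = 0 ∧ w 1 = 0 ∧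
      ∀ x ∈ Set.Icc (0:ℝ) 1, ∫ s in (0:ℝ)..1, G1 x s * f s = w x := by
  have h := green_solves (p := fun x => x) (q := fun x => 1 - x) (p' := fun _ => 1)
    (q' := fun _ => -1) (c := 0) (K := G1) (f := f)
    (fun x => hasDerivAt_id x) (fun x => by simpa using hasDerivAt_const x (1:ℝ))
    (fun x => by simpa using (hasDerivAt_id x).const_sub 1)
    (fun x => by simpa using hasDerivAt_const x (-1:ℝ)) (fun x => by ring) hf rfl (by simp)
    (fun x s h => by
      rcases h.eq_or_lt with rfl | h
      · simp [G1]
      · simp [G1, not_le.2 h])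
    (fun x s h => by simp [G1, h])
  simpa using h

/-- `green_solves` for the kernel `G2`, with `p x = sinh (√m x)`,
`q x = sinh (√m (1 - x)) / (√m sinh √m)` and `c = m`. -/
lemma G2_solves {m : ℝ} (hm : 0 < m) {f : ℝ → ℝ} (hf : Continuous f) :
    ∃ w w' : ℝ → ℝ, (∀ x, HasDerivAt w (w' x) x) ∧ (∀ x, HasDerivAt w' (m * w x - f x) x) ∧
      w 0 = 0 ∧ w 1 = 0 ∧
      ∀ x ∈ Set.Icc (0:ℝ) 1, ∫ s in (0:ℝ)..1, G2 m x s * f s = w x := by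
  obtain ⟨r, hr, rfl⟩ : ∃ r : ℝ, 0 < r ∧ m = r * r :=
    ⟨√m, Real.sqrt_pos.2 hm, (Real.mul_self_sqrt hm.le).symm⟩
  have hs : 0 < sinh r := Real.sinh_pos_iff.2 hr
  have hrr : √(r * r) = r := Real.sqrt_mul_self hr.le
  have d₁ : ∀ x, HasDerivAt (fun x : ℝ => r * x) r x := fun x => by
    simpa using (hasDerivAt_id x).const_mul r
  have d₂ : ∀ x, HasDerivAt (fun x : ℝ => r * (1 - x)) (-r) x := fun x => by
    simpa using ((hasDerivAt_id x).const_sub 1).const_mul r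
  refine green_solves (p := fun x => sinh (r * x))
    (q := fun x => sinh (r * (1 - x)) / (r * sinh r)) (p' := fun x => cosh (r * x) * r)
    (q' := fun x => cosh (r * (1 - x)) * (-r) / (r * sinh r))
    (fun x => (d₁ x).sinh)
    (fun x => ((d₁ x).cosh.mul_const r).congr_deriv (by ring))
    (fun x => (d₂ x).sinh.div_const _)
    (fun x => (((d₂ x).cosh.mul_const (-r)).div_const _).congr_deriv (by ring))
    (fun x => ?_) hf (by simp) (by simp)
    (fun x s h => ?_) (fun x s h => ?_)
  · -- the addition formula for `sinh (r * x + r * (1 - x))`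
    have h : sinh r = sinh (r * x) * cosh (r * (1 - x)) + cosh (r * x) * sinh (r * (1 - x)) := by
      rw [← Real.sinh_add]; congr 1; ring
    field_simp
    linarith
  · simp only [G2, hrr, if_pos h]; ring
  · rcases h.eq_or_lt with rfl | h
    · simp only [G2, hrr, le_refl, if_true]; ring
    · simp only [G2, hrr, not_le.2 h, if_false]; ring

/-- The Green-function representation
`u(x) = ∫₀¹∫₀¹ G₁(x,t) G₂(t,s) g(s) ds dt` yields a `C⁴` solution of
`u'''' - m·u'' = g` with hinged boundary conditions, with `u'' = -∫₀¹ G₂(x,s) g(s) ds`. -/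
theorem stmt4 (m : ℝ) (hm : 0 < m) (g : ℝ → ℝ)
    (hg : ContinuousOn g (Set.Icc 0 1))
    (u : ℝ → ℝ)
    (hu : u = fun x => ∫ t in (0:ℝ)..1, ∫ s in (0:ℝ)..1, G1 x t * G2 m t s * g s) :
    ContDiffOn ℝ 4 u (Set.Icc 0 1) ∧
    (∀ x ∈ Set.Ioo (0:ℝ) 1, D 4 u x - m * D 2 u x = g x) ∧ BC u ∧
    (∀ x ∈ Set.Icc (0:ℝ) 1, D 2 u x = - ∫ s in (0:ℝ)..1, G2 m x s * g s) := by
  obtain ⟨f, hf, hfg⟩ : ∃ f : ℝ → ℝ, Continuous f ∧ EqOn f g (Icc 0 1) :=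
    ⟨IccExtend zero_le_one ((Icc (0:ℝ) 1).domRestrict g), hg.domRestrict.Icc_extend',
      fun x hx => IccExtend_of_mem _ _ hx⟩
  obtain ⟨w, w', hw, hw', w0, w1, hwG⟩ := G2_solves hm hf
  have cw : Continuous w := continuous_iff_continuousAt.2 fun x => (hw x).continuousAt
  obtain ⟨U, U', hU, hU', U0, U1, hUG⟩ := G1_solves cw
  have hwg : ∀ x ∈ Icc (0:ℝ) 1, ∫ s in (0:ℝ)..1, G2 m x s * g s = w x := by
    intro x hx
    rw [← hwG x hx]
    refine intervalIntegral.integral_congr fun s hs => ?_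
    rw [uIcc_of_le zero_le_one] at hs
    simp only [hfg hs]
  have huU : EqOn u U (Icc 0 1) := by
    intro x hx
    rw [hu, ← hUG x hx]
    refine intervalIntegral.integral_congr fun t ht => ?_
    rw [uIcc_of_le zero_le_one] at ht
    simp only [mul_assoc, intervalIntegral.integral_const_mul, hwg t ht]
  have E1 : deriv U = U' := funext fun x => (hU x).deriv
  have E2 : deriv U' = fun x => -w x := funext fun x => (hU' x).deriv
  have E3 : deriv (fun x => -w x) = fun x => -w' x := funext fun x => (hw x).neg.deriv
  have E4 : deriv (fun x => -w' x) = fun x => -(m * w x - f x) :=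
    funext fun x => (hw' x).neg.deriv
  have I2 : iteratedDeriv 2 U = fun x => -w x := by
    simp only [iteratedDeriv_succ', iteratedDeriv_zero, E1, E2]
  have I4 : iteratedDeriv 4 U = fun x => -(m * w x - f x) := by
    simp only [iteratedDeriv_succ', iteratedDeriv_zero, E1, E2, E3, E4]
  have hC : ContDiff ℝ 4 U := by
    have step : ∀ (n : ℕ) {F F' : ℝ → ℝ}, (∀ x, HasDerivAt F (F' x) x) → ContDiff ℝ n F' →
        ContDiff ℝ (n + 1 : ℕ) F := fun n F F' hF hF' => by
      have e : deriv F = F' := funext fun x => (hF x).deriv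
      push_cast
      exact contDiff_succ_iff_deriv.2 ⟨fun x => (hF x).differentiableAt, by simp, e ▸ hF'⟩
    have c0 : ContDiff ℝ (0 : ℕ) fun x => m * w x - f x :=
      contDiff_zero.2 ((cw.const_mul m).sub hf)
    exact_mod_cast step 3 hU (step 2 hU' (step 1 hw (step 0 hw' c0)).neg)
  have hD : ∀ n : ℕ, n ≤ 4 → ∀ x ∈ Icc (0:ℝ) 1, D n u x = iteratedDeriv n U x := by
    intro n hn x hx
    rw [D, iteratedDerivWithin_congr huU hx]
    exact iteratedDerivWithin_eq_iteratedDeriv (uniqueDiffOn_Icc zero_lt_one)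
      (hC.of_le (by exact_mod_cast hn)).contDiffAt hx
  have h0 : (0:ℝ) ∈ Icc (0:ℝ) 1 := by simp
  have h1 : (1:ℝ) ∈ Icc (0:ℝ) 1 := by simp
  refine ⟨hC.contDiffOn.congr huU, fun x hx => ?_, ⟨?_, ?_, ?_, ?_⟩, fun x hx => ?_⟩
  · have hx' := Ioo_subset_Icc_self hx
    rw [hD 4 le_rfl x hx', hD 2 (by norm_num) x hx', I2, I4, ← hfg hx']
    ring
  · rw [huU h0, U0]
  · rw [huU h1, U1]
  · simp [hD 2 (by norm_num) 0 h0, I2, w0]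
  · simp [hD 2 (by norm_num) 1 h1, I2, w1]
  · rw [hD 2 (by norm_num) x hx, I2, hwg x hx]
end
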